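/- Fix v > 0 and ω̄ > 0. For the Dubins car system with state (p_x, p_y, θ) ∈ ℝ³, admissible controls being measurable functions ω : ℝ → [−ω̄, ω̄], and dynamics p_x' = v·cos θ, p_y' = v·sin θ, θ' = ω, define for an initial state z₀ ∈ ℝ³ and time t ≥ 0 the forward reachable set F(z₀, t) = {z : there exist an admissible control ω and a differentiable trajectory x : ℝ → ℝ³ satisfying the dynamics with x(0) = z₀ and x(t) = z}. Then for every θ₀ ∈ ℝ and t ≥ 0: F((0, 0, θ₀), t) = {(cos(θ₀)·a − sin(θ₀)·b, sin(θ₀)·a + cos(θ₀)·b, θ + θ₀) : (a, b, θ) ∈ F((0, 0, 0), t)}. -/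

import Mathlib

/-- The forward reachable set of the Dubins car with speed `v` and turn-rate bound `ωmax`:
states reachable at time `t` from initial state `z₀` by some measurable control
`ω : ℝ → [-ωmax, ωmax]` along a trajectory of the dynamics
`p_x' = v cos θ, p_y' = v sin θ, θ' = ω`. -/
def DubinsFRS (v ωmax : ℝ) (z₀ : ℝ × ℝ × ℝ) (t : ℝ) : Set (ℝ × ℝ × ℝ) :=
  {z | ∃ (ω : ℝ → ℝ) (px py θ : ℝ → ℝ),
        Measurable ω ∧ (∀ s, ω s ∈ Set.Icc (-ωmax) ωmax) ∧
        (∀ s, HasDerivAt px (v * Real.cos (θ s)) s) ∧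
        (∀ s, HasDerivAt py (v * Real.sin (θ s)) s) ∧
        (∀ s, HasDerivAt θ (ω s) s) ∧
        (px 0, py 0, θ 0) = z₀ ∧ (px t, py t, θ t) = z}

theorem dubinsFRS_rot_mem (v ωmax α β t a b c : ℝ)
    (h : (a, b, c) ∈ DubinsFRS v ωmax (0, 0, β) t) :
    (Real.cos α * a - Real.sin α * b, Real.sin α * a + Real.cos α * b, c + α)
      ∈ DubinsFRS v ωmax (0, 0, β + α) t := by
  obtain ⟨ω, px, py, θ, hm, hb, hx, hy, hθ, h0, h1⟩ := h
  simp only [Prod.mk.injEq] at h0 h1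
  obtain ⟨h01, h02, h03⟩ := h0
  obtain ⟨h11, h12, h13⟩ := h1
  refine ⟨ω, fun s => Real.cos α * px s - Real.sin α * py s,
    fun s => Real.sin α * px s + Real.cos α * py s, fun s => θ s + α, hm, hb, ?_, ?_, ?_, ?_, ?_⟩
  · intro s
    refine (((hx s).const_mul (Real.cos α)).sub ((hy s).const_mul (Real.sin α))).congr_deriv ?_
    rw [Real.cos_add]; ring
  · intro s
    refine (((hx s).const_mul (Real.sin α)).add ((hy s).const_mul (Real.cos α))).congr_deriv ?_
    rw [Real.sin_add]; ring
  · intro s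
    exact (hθ s).add_const α
  · simp [h01, h02, h03]
  · simp [h11, h12, h13]

/-- Rotation equivariance of the Dubins car forward reachable set: the FRS from the
origin with heading `θ₀` is the image of the FRS from the origin with heading `0`
under a rotation of the position by angle `θ₀` and a shift of the heading by `θ₀`. -/
theorem dubinsFRS_rotation
    (v ωmax : ℝ) (hv : 0 < v) (hωmax : 0 < ωmax)
    (θ₀ : ℝ) (t : ℝ) (ht : 0 ≤ t) :
    DubinsFRS v ωmax (0, 0, θ₀) t =
      {z | ∃ a b θ : ℝ, (a, b, θ) ∈ DubinsFRS v ωmax (0, 0, 0) t ∧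
        z = (Real.cos θ₀ * a - Real.sin θ₀ * b,
             Real.sin θ₀ * a + Real.cos θ₀ * b,
             θ + θ₀)} := by
  ext ⟨x, y, c⟩
  constructor
  · intro h
    have h2 := dubinsFRS_rot_mem v ωmax (-θ₀) θ₀ t x y c h
    rw [add_neg_cancel] at h2
    refine ⟨_, _, _, h2, ?_⟩
    have e := Real.sin_sq_add_cos_sq θ₀
    simp only [Real.cos_neg, Real.sin_neg, Prod.mk.injEq]
    refine ⟨?_, ?_, ?_⟩
    · linear_combination (-x) * e
    · linear_combination (-y) * e
    · ring
  · rintro ⟨a, b, θ, h, e⟩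
    rw [e]
    have h2 := dubinsFRS_rot_mem v ωmax θ₀ 0 t a b θ h
    rwa [zero_add] at h2
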